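/- Let G be a bipartite graph on finite vertex sets X and Y, and let M be its adjacency matrix over ℝ (M(x,y) = 1 if (x,y) is an edge and 0 otherwise). If G has a projective realization of dimension d over a finite field F with q elements such that the realization has intersection dimension 1, then rank_ℝ(M) ≤ (q^d − 1)/(q − 1). -/

import Mathlib

open scoped Classical

/-- A projective realization of a bipartite graph over a field `F`. -/
def IsProjRealization (F : Type) [Field F] {X Y : Type} (E : X → Y → Prop) (d : ℕ)
    (φX : X → Submodule F (Fin d → F)) (φY : Y → Submodule F (Fin d → F)) : Prop :=
  ∀ x y, E x y ↔ φX x ⊓ φY y ≠ ⊥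

/-!
A subspace of dimension at most one contains a single point of the projective space `ℙ K V` if it is
nonzero and none otherwise. So the entry of the adjacency matrix at `(x, y)` counts the points
common to `φ x` and `φ y`. The matrix is therefore a product of two incidence matrices whose inner
index set is `ℙ K V`, and its rank is at most the number of points.
-/

open scoped LinearAlgebra.Projectivization Matrix

section SetFamily

variable {R X Y P : Type*}

/-- The incidence matrix of a family of sets `S : X → Set P`: the row indexed by `x` is the
characteristic vector of `S x`. -/
noncomputable def setIncidenceMatrix (R : Type*) [Zero R] [One R] (S : X → Set P) :
    Matrix X P R :=
  Matrix.of fun x => (S x).indicator 1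

theorem setIncidenceMatrix_mul_transpose_apply [NonAssocSemiring R] [Fintype P]
    (S : X → Set P) (T : Y → Set P) (x : X) (y : Y) :
    (setIncidenceMatrix R S * (setIncidenceMatrix R T)ᵀ) x y = (S x ∩ T y).ncard := by
  calc (setIncidenceMatrix R S * (setIncidenceMatrix R T)ᵀ) x y
      = ∑ p, (S x ∩ T y).indicator (1 : P → R) p := by
        simp only [setIncidenceMatrix, Matrix.mul_apply, Matrix.transpose_apply, Matrix.of_apply,
          Set.inter_indicator_one, Pi.mul_apply]
    _ = (S x ∩ T y).ncard := by
        simp only [Set.indicator_apply, Pi.one_apply, Finset.sum_boole,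
          Set.ncard_eq_toFinset_card', Set.filter_mem_univ_eq_toFinset]

theorem rank_le_card_of_apply_eq_ncard_inter [CommSemiring R] [StrongRankCondition R] [Finite P]
    [Fintype Y] {M : Matrix X Y R} (S : X → Set P) (T : Y → Set P)
    (hM : ∀ x y, M x y = (S x ∩ T y).ncard) : M.rank ≤ Nat.card P := by
  have := Fintype.ofFinite P
  have hfactor : M = setIncidenceMatrix R S * (setIncidenceMatrix R T)ᵀ := by
    ext x y
    rw [hM, setIncidenceMatrix_mul_transpose_apply]
  calc M.rank ≤ (setIncidenceMatrix R S).rank := hfactor ▸ Matrix.rank_mul_le_left _ _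
    _ ≤ Fintype.card P := Matrix.rank_le_card_width _
    _ = Nat.card P := Fintype.card_eq_nat_card

end SetFamily

section Points

variable {K V : Type*} [DivisionRing K] [AddCommGroup V] [Module K V] (U W : Submodule K V)

theorem coe_projectivization_nonempty_iff :
    (W.projectivization : Set (ℙ K V)).Nonempty ↔ W ≠ ⊥ := by
  rw [Submodule.ne_bot_iff]
  constructor
  · rintro ⟨p, hp⟩
    induction p with | h v hv => exact ⟨v, hp, hv⟩
  · rintro ⟨v, hvW, hv⟩
    exact ⟨.mk K v hv, hvW⟩

theorem coe_projectivization_subsingleton_of_finrank_le_one [FiniteDimensional K W]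
    (hW : Module.finrank K W ≤ 1) :
    (W.projectivization : Set (ℙ K V)).Subsingleton := by
  have submodule_eq (p : ℙ K V) (hp : p ∈ W.projectivization) : p.submodule = W :=
    Submodule.eq_of_le_of_finrank_le ((W.mem_projectivization_iff_submodule_le p).1 hp)
      (hW.trans_eq p.finrank_submodule.symm)
  exact fun p hp p' hp' =>
    Projectivization.submodule_injective ((submodule_eq p hp).trans (submodule_eq p' hp').symm)

theorem ncard_projectivization_of_finrank_le_one [FiniteDimensional K W]
    (hW : Module.finrank K W ≤ 1) :
    (W.projectivization : Set (ℙ K V)).ncard = if W = ⊥ then 0 else 1 := by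
  split_ifs with hbot
  · have hempty : (W.projectivization : Set (ℙ K V)) = ∅ :=
      Set.not_nonempty_iff_eq_empty.1 (mt (coe_projectivization_nonempty_iff W).1 (not_not.2 hbot))
    rw [hempty, Set.ncard_empty]
  · obtain ⟨p, hp⟩ := Set.exists_eq_singleton_iff_nonempty_subsingleton.2
      ⟨(coe_projectivization_nonempty_iff W).2 hbot,
        coe_projectivization_subsingleton_of_finrank_le_one W hW⟩
    rw [hp, Set.ncard_singleton]

theorem coe_projectivization_inf :
    ((U ⊓ W).projectivization : Set (ℙ K V)) =
      (U.projectivization : Set (ℙ K V)) ∩ W.projectivization := by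
  ext p
  simp only [Set.mem_inter_iff, SetLike.mem_coe, Submodule.mem_projectivization_iff_submodule_le,
    le_inf_iff]

end Points

theorem stmt_5_general {K V R X Y : Type*} [DivisionRing K] [AddCommGroup V] [Module K V]
    [Finite V] [CommSemiring R] [StrongRankCondition R] [Fintype Y]
    (E : X → Y → Prop) (M : Matrix X Y R) (hM : ∀ x y, M x y = if E x y then 1 else 0)
    (φX : X → Submodule K V) (φY : Y → Submodule K V)
    (hreal : ∀ x y, E x y ↔ φX x ⊓ φY y ≠ ⊥)
    (hint : ∀ x y, Module.finrank K ↥(φX x ⊓ φY y) ≤ 1) :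
    M.rank ≤ Nat.card (ℙ K V) := by
  refine rank_le_card_of_apply_eq_ncard_inter (fun x => ((φX x).projectivization : Set (ℙ K V)))
    (fun y => (φY y).projectivization) fun x y => ?_
  calc M x y = ((if φX x ⊓ φY y = ⊥ then 0 else 1 : ℕ) : R) := by simp [hM, hreal]
    _ = ((φX x ⊓ φY y).projectivization : Set (ℙ K V)).ncard := by
        rw [ncard_projectivization_of_finrank_le_one _ (hint x y)]
    _ = (((φX x).projectivization : Set (ℙ K V)) ∩ (φY y).projectivization).ncard := by
        rw [coe_projectivization_inf]

/-- If a bipartite graph has a projective realization of dimension `d` with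
intersection dimension `1` over a finite field with `q` elements, then the real rank
of its adjacency matrix is at most `(q^d − 1)/(q − 1)`. -/
theorem stmt_5 (F : Type) [Field F] [Fintype F] (q : ℕ) (hq : q = Fintype.card F)
    (X Y : Type) [Fintype X] [Fintype Y]
    (E : X → Y → Prop) (M : Matrix X Y ℝ)
    (hM : ∀ x y, M x y = if E x y then 1 else 0)
    (d : ℕ) (φX : X → Submodule F (Fin d → F)) (φY : Y → Submodule F (Fin d → F))
    (hreal : IsProjRealization F E d φX φY)
    (hint : ∀ x y, Module.finrank F ↥(φX x ⊓ φY y) ≤ 1) :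
    M.rank ≤ (q ^ d - 1) / (q - 1) := by
  have hcard : Nat.card (ℙ F (Fin d → F)) = (q ^ d - 1) / (q - 1) := by
    simp [Projectivization.card'', hq]
  exact hcard ▸ stmt_5_general E M hM φX φY hreal hint
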